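/- Let b be a nonzero integer, let k ≥ 1 be an integer, and let p be an odd prime that is a k-Pisano-Legendre prime relative to (0,b) such that (F₁/p) = (F₂/p) = 1. Let G be a connected graph of order n and size n(2k−1)+ε, where ε ∈ {−1,0,1}. Then the corona graph G ∘ P_{π_p(0,b)−1} is a (0,b)-Fibonacci-Legendre cordial graph modulo p. -/

import Mathlib

/-!
Write `π` for the Pisano period. Since `k ≠ 0`, the set defining `π` is nonempty, so `π` is a
genuine period, and `(F₁/p) = 1` together with `F₀ = 0` forces `π ≥ 2`. Number the vertices of `G` by
`0, …, n - 1`; give the `c`-th vertex of `G` the label `cπ`, and give the path attached to it the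
labels `cπ + 1, …, cπ + π - 1` in order. By periodicity:

* an edge of `G` has label sum `≡ 0`, hence is labeled `0`;
* the spokes at a vertex have label sums `≡ F₁, …, F_{π-1}`, contributing `k + 1` to `e(1) - e(0)`;
* the edges of a path have label sums `≡ F_j + F_{j+1} = F_{j+2}`, that is `F₃, …, F_π`,
  contributing `k - 2`.

Hence `e(1) - e(0) = n(2k - 1) - |E(G)| = -ε`. The function `flcSign` records the contribution of
an edge to `e(1) - e(0)`, and `coronaEdge` enumerates the edges of the corona.
-/

noncomputable section

/-- The `(a,b)`-Fibonacci sequence: `F 0 = a`, `F 1 = b`, `F (n+2) = F n + F (n+1)`. -/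
def fibAB (a b : ℤ) : ℕ → ℤ
  | 0 => a
  | 1 => b
  | n + 2 => fibAB a b n + fibAB a b (n + 1)

/-- The `(a,b)`-Pisano period of `p`: the least positive `k` with
`F (n + k) ≡ F n (mod p)` for all `n`. -/
def pisanoAB (a b : ℤ) (p : ℕ) : ℕ :=
  sInf {k : ℕ | 0 < k ∧ ∀ n : ℕ, fibAB a b (n + k) ≡ fibAB a b n [ZMOD (p : ℤ)]}

/-- `Λ_j^p(a,b)`: the indices `ξ ∈ {0, …, π_p(a,b) - 1}` with `(F_ξ / p) = j`,
where (for odd prime `p`) the Legendre symbol is given by `jacobiSym`. -/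
def LambdaSet (a b : ℤ) (p : ℕ) (j : ℤ) : Finset ℕ :=
  (Finset.range (pisanoAB a b p)).filter fun ξ => jacobiSym (fibAB a b ξ) p = j

/-- `p` is a `k`-Pisano–Legendre prime relative to `(a,b)`. -/
def IsPLPrime (a b : ℤ) (p : ℕ) (k : ℤ) : Prop :=
  k = ((LambdaSet a b p 1).card : ℤ) - ((LambdaSet a b p (-1)).card : ℤ)
      - ((LambdaSet a b p 0).card : ℤ)

/-- `χ(a,b)`: the set of integers `k` for which some odd prime is a `k`-PL prime
relative to `(a,b)`. -/
def chiSet (a b : ℤ) : Set ℤ :=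
  {k | ∃ p : ℕ, p.Prime ∧ Odd p ∧ IsPLPrime a b p k}

/-- The order of apparition `z(p)` of `p` in the classical Fibonacci sequence. -/
def apparition (p : ℕ) : ℕ :=
  sInf {n : ℕ | 0 < n ∧ (p : ℤ) ∣ fibAB 0 1 n}

/-- The induced edge label `f_p*` on an unordered pair of vertex labels. -/
def flcEdgeLabel (a b : ℤ) (p : ℕ) : Sym2 ℕ → ℕ :=
  Sym2.lift ⟨fun x y =>
    if (p : ℤ) ∣ (fibAB a b x + fibAB a b y) then 0
    else (1 + jacobiSym (fibAB a b x + fibAB a b y) p).toNat / 2,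
    fun x y => by dsimp only; rw [add_comm (fibAB a b x) (fibAB a b y)]⟩

/-- The number of edges of `G` receiving label `i` under the vertex labeling `f`. -/
def flcCount {V : Type*} (G : SimpleGraph V) (a b : ℤ) (p : ℕ) (f : V → ℕ) (i : ℕ) : ℕ :=
  {e ∈ G.edgeSet | flcEdgeLabel a b p (e.map f) = i}.ncard

/-- `G` is an `(a,b)`-Fibonacci–Legendre cordial graph modulo `p`: there is a bijective
vertex labeling by `{0, …, |V| - 1}` with `|e(0) - e(1)| ≤ 1`. -/
def IsFLCGraph {V : Type*} [Fintype V] (G : SimpleGraph V) (a b : ℤ) (p : ℕ) : Prop :=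
  ∃ f : V ≃ Fin (Fintype.card V),
    |(flcCount G a b p (fun v => ((f v : Fin (Fintype.card V)) : ℕ)) 0 : ℤ) -
      (flcCount G a b p (fun v => ((f v : Fin (Fintype.card V)) : ℕ)) 1 : ℤ)| ≤ 1

/-- The path graph on `n` vertices. -/
def pathG (n : ℕ) : SimpleGraph (Fin n) :=
  SimpleGraph.fromRel fun i j => (i : ℕ) + 1 = (j : ℕ)

/-- The cycle graph on `n` vertices: the path graph plus the edge between the
first and last vertex. -/
def cycleG (n : ℕ) : SimpleGraph (Fin n) :=
  SimpleGraph.fromRel fun i j => (i : ℕ) + 1 = (j : ℕ) ∨ ((i : ℕ) = 0 ∧ (j : ℕ) = n - 1)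

/-- The star graph on `n` vertices with central vertex `0`. -/
def starG (n : ℕ) : SimpleGraph (Fin n) :=
  SimpleGraph.fromRel fun i _ => (i : ℕ) = 0

/-- The wheel graph on `n` vertices: hub `0` joined to every vertex of the cycle on
`1, …, n-1`. -/
def wheelG (n : ℕ) : SimpleGraph (Fin n) :=
  SimpleGraph.fromRel fun i j =>
    (i : ℕ) = 0 ∨ (i : ℕ) + 1 = (j : ℕ) ∨ ((i : ℕ) = 1 ∧ (j : ℕ) = n - 1)

/-- Lexicographic product of graphs. -/
def lexProd {α β : Type*} (G : SimpleGraph α) (H : SimpleGraph β) : SimpleGraph (α × β) :=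
  SimpleGraph.fromRel fun x y => G.Adj x.1 y.1 ∨ (x.1 = y.1 ∧ H.Adj x.2 y.2)

/-- Cartesian product of graphs. -/
def cartProd {α β : Type*} (G : SimpleGraph α) (H : SimpleGraph β) : SimpleGraph (α × β) :=
  SimpleGraph.fromRel fun x y => (x.1 = y.1 ∧ H.Adj x.2 y.2) ∨ (x.2 = y.2 ∧ G.Adj x.1 y.1)

/-- Tensor product of graphs. -/
def tensorProd {α β : Type*} (G : SimpleGraph α) (H : SimpleGraph β) : SimpleGraph (α × β) :=
  SimpleGraph.fromRel fun x y => G.Adj x.1 y.1 ∧ H.Adj x.2 y.2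

/-- Strong product of graphs: union of the cartesian and tensor products. -/
def strongProd {α β : Type*} (G : SimpleGraph α) (H : SimpleGraph β) : SimpleGraph (α × β) :=
  cartProd G H ⊔ tensorProd G H

/-- Join of two graphs: both graphs together with all edges between them. -/
def joinG {α β : Type*} (G : SimpleGraph α) (H : SimpleGraph β) : SimpleGraph (α ⊕ β) :=
  SimpleGraph.fromRel fun x y =>
    match x, y with
    | Sum.inl u, Sum.inl v => G.Adj u v
    | Sum.inr u, Sum.inr v => H.Adj u v
    | Sum.inl _, Sum.inr _ => True
    | Sum.inr _, Sum.inl _ => True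

/-- Corona `G ∘ H`: one copy of `G`, a copy of `H` for each vertex of `G`, and the
`u`-th vertex of `G` joined to every vertex of the `u`-th copy of `H`. -/
def coronaG {α β : Type*} (G : SimpleGraph α) (H : SimpleGraph β) :
    SimpleGraph (α ⊕ α × β) :=
  SimpleGraph.fromRel fun x y =>
    match x, y with
    | Sum.inl u, Sum.inl v => G.Adj u v
    | Sum.inr (u, s), Sum.inr (v, t) => u = v ∧ H.Adj s t
    | Sum.inl u, Sum.inr (v, _) => u = v
    | Sum.inr (u, _), Sum.inl v => u = v

/-- Disjoint union of a family of graphs on a common vertex type. -/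
def unionFam {ι V : Type*} (Gs : ι → SimpleGraph V) : SimpleGraph (ι × V) :=
  SimpleGraph.fromRel fun x y => x.1 = y.1 ∧ (Gs x.1).Adj x.2 y.2

/-- The contribution to `e(1) - e(0)` of an edge whose end labels have Fibonacci values summing
to `z`: it is `1` when `z` is a nonzero square modulo `p`, and `-1` otherwise. -/
def flcSign (p : ℕ) (z : ℤ) : ℤ := if jacobiSym z p = 1 then 1 else -1

lemma flcSign_congr {p : ℕ} {x y : ℤ} (h : x ≡ y [ZMOD (p : ℤ)]) :
    flcSign p x = flcSign p y := by
  unfold flcSign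
  rw [jacobiSym.mod_left' h]

lemma flcSign_zero {p : ℕ} (hp : p.Prime) : flcSign p 0 = -1 := by
  simp [flcSign, jacobiSym.zero_left hp.one_lt]

lemma flcEdgeLabel_mk (a b : ℤ) (p : ℕ) (hp : p.Prime) (x y : ℕ) :
    flcEdgeLabel a b p s(x, y) =
      if jacobiSym (fibAB a b x + fibAB a b y) p = 1 then 1 else 0 := by
  simp only [flcEdgeLabel, Sym2.lift_mk]
  split_ifs with h1 h2 h2
  · have h0 := jacobiSym.mod_left' (b := p)
      (show (fibAB a b x + fibAB a b y) % p = 0 % p by simpa using Int.emod_eq_zero_of_dvd h1)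
    rw [jacobiSym.zero_left hp.one_lt] at h0
    omega
  · rfl
  · rw [h2]; rfl
  · rcases jacobiSym.trichotomy (fibAB a b x + fibAB a b y) p with h | h | h
    · rw [h]; rfl
    · exact absurd h h2
    · rw [h]; rfl

/-- The difference `e(1) - e(0)` computed through any enumeration `Φ` of the edges. -/
lemma flcCount_sub {W T : Type*} [Fintype T] (H : SimpleGraph W) (a b : ℤ) (p : ℕ)
    (hp : p.Prime) (f : W → ℕ) (Φ : T → W × W)
    (hinj : Function.Injective fun t => s((Φ t).1, (Φ t).2))
    (hrange : Set.range (fun t => s((Φ t).1, (Φ t).2)) = H.edgeSet) :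
    (flcCount H a b p f 1 : ℤ) - flcCount H a b p f 0 =
      ∑ t, flcSign p (fibAB a b (f (Φ t).1) + fibAB a b (f (Φ t).2)) := by
  classical
  have key : ∀ i : ℕ, (flcCount H a b p f i : ℤ) =
      ∑ t, if flcEdgeLabel a b p s(f (Φ t).1, f (Φ t).2) = i then (1 : ℤ) else 0 := by
    intro i
    have hset : {e ∈ H.edgeSet | flcEdgeLabel a b p (e.map f) = i} =
        (fun t => s((Φ t).1, (Φ t).2)) ''
          (↑(Finset.univ.filter fun t => flcEdgeLabel a b p s(f (Φ t).1, f (Φ t).2) = i) :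
            Set T) := by
      rw [← hrange]
      ext e
      constructor
      · rintro ⟨⟨t, rfl⟩, h⟩
        exact ⟨t, by simpa using h, rfl⟩
      · rintro ⟨t, h, rfl⟩
        exact ⟨⟨t, rfl⟩, by simpa using h⟩
    unfold flcCount
    rw [hset, Set.ncard_image_of_injective _ hinj, Set.ncard_coe_finset, Finset.sum_boole]
  rw [key 1, key 0, ← Finset.sum_sub_distrib]
  refine Finset.sum_congr rfl fun t _ => ?_
  rw [flcEdgeLabel_mk a b p hp, flcSign]
  split_ifs <;> simp_all

/-- An enumeration of the edges of the corona of `G` with a path on `q + 1` vertices, each edge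
given by its two ends: the edges of `G`, the spokes, and the edges of the path copies. -/
def coronaEdge {V : Type*} (G : SimpleGraph V) (q : ℕ) :
    (G.edgeSet ⊕ (V × Fin (q + 1)) ⊕ (V × Fin q)) →
      (V ⊕ V × Fin (q + 1)) × (V ⊕ V × Fin (q + 1))
  | Sum.inl e => (Sum.inl (Quot.out e.1).1, Sum.inl (Quot.out e.1).2)
  | Sum.inr (Sum.inl (u, s)) => (Sum.inl u, Sum.inr (u, s))
  | Sum.inr (Sum.inr (u, s)) => (Sum.inr (u, s.castSucc), Sum.inr (u, s.succ))

lemma sym2_mk_out {V : Type*} (e : Sym2 V) : s((Quot.out e).1, (Quot.out e).2) = e :=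
  Quot.out_eq e

lemma coronaEdge_injective {V : Type*} (G : SimpleGraph V) (q : ℕ) :
    Function.Injective fun t => s((coronaEdge G q t).1, (coronaEdge G q t).2) := by
  rintro (e | ⟨u, s⟩ | ⟨u, s⟩) (e' | ⟨u', s'⟩ | ⟨u', s'⟩) h
  · have : s((Quot.out e.1).1, (Quot.out e.1).2) = s((Quot.out e'.1).1, (Quot.out e'.1).2) := by
      rw [Sym2.eq_iff]
      simpa [coronaEdge] using h
    rw [sym2_mk_out, sym2_mk_out] at this
    rw [Subtype.ext this]
  · simp [coronaEdge] at h
  · simp [coronaEdge] at h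
  · simp [coronaEdge] at h
  · simp [coronaEdge] at h
    simp [h]
  · simp [coronaEdge] at h
  · simp [coronaEdge] at h
  · simp [coronaEdge] at h
  · simp only [coronaEdge, Sym2.eq_iff, Sum.inr.injEq, Prod.mk.injEq, Fin.ext_iff,
      Fin.val_castSucc, Fin.val_succ] at h
    have h1 : u = u' := by tauto
    have h2 : s = s' := Fin.ext (by omega)
    rw [h1, h2]

lemma coronaEdge_range {V : Type*} (G : SimpleGraph V) (q : ℕ) :
    Set.range (fun t => s((coronaEdge G q t).1, (coronaEdge G q t).2)) =
      (coronaG G (pathG (q + 1))).edgeSet := by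
  ext e
  constructor
  · rintro ⟨e | ⟨u, s⟩ | ⟨u, s⟩, rfl⟩
    · have h : G.Adj (Quot.out e.1).1 (Quot.out e.1).2 := by
        rw [← SimpleGraph.mem_edgeSet, sym2_mk_out]
        exact e.2
      simp [coronaEdge, coronaG, h, h.ne]
    · simp [coronaEdge, coronaG]
    · simp [coronaEdge, coronaG, pathG, Fin.ext_iff]
  · -- `coronaEdge` lists each path edge from its lower end, so the other orientation needs a swap.
    have hpath : ∀ (u : V) (s t : Fin (q + 1)), (s : ℕ) + 1 = t →
        ∃ x, s((coronaEdge G q x).1, (coronaEdge G q x).2) =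
          s(Sum.inr (u, s), Sum.inr (u, t)) := by
      intro u s t h
      refine ⟨Sum.inr (Sum.inr (u, ⟨s, by omega⟩)), ?_⟩
      have h1 : (⟨s, by omega⟩ : Fin q).castSucc = s := rfl
      have h2 : (⟨s, by omega⟩ : Fin q).succ = t := Fin.ext h
      simp only [coronaEdge, h1, h2]
    induction e using Sym2.ind with
    | _ x y =>
      intro h
      rw [SimpleGraph.mem_edgeSet] at h
      rcases x with u | ⟨u, s⟩ <;> rcases y with v | ⟨v, t⟩
      · have h' : G.Adj u v := by
          simp only [coronaG, SimpleGraph.fromRel_adj] at h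
          exact h.2.elim id fun h => h.symm
        refine ⟨Sum.inl ⟨s(u, v), h'⟩, ?_⟩
        have := congrArg (Sym2.map (Sum.inl : V → V ⊕ V × Fin (q + 1))) (sym2_mk_out s(u, v))
        rw [Sym2.map_mk] at this
        exact this
      · have h' : u = v := by
          simp only [coronaG, SimpleGraph.fromRel_adj] at h
          exact h.2.elim id fun h => h.symm
        subst h'
        exact ⟨Sum.inr (Sum.inl (u, t)), rfl⟩
      · have h' : u = v := by
          simp only [coronaG, SimpleGraph.fromRel_adj] at h
          exact h.2.elim id fun h => h.symm
        subst h'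
        exact ⟨Sum.inr (Sum.inl (u, s)), Sym2.eq_swap⟩
      · have h' : u = v ∧ ((s : ℕ) + 1 = t ∨ (t : ℕ) + 1 = s) := by
          simp only [coronaG, pathG, SimpleGraph.fromRel_adj] at h
          rcases h.2 with ⟨h1, -, h2⟩ | ⟨h1, -, h2⟩
          · exact ⟨h1, h2⟩
          · exact ⟨h1.symm, h2.symm⟩
        obtain ⟨rfl, h' | h'⟩ := h'
        · exact hpath u s t h'
        · obtain ⟨x, hx⟩ := hpath u t s h'
          exact ⟨x, hx.trans Sym2.eq_swap⟩

lemma fibAB_add_mul {a b : ℤ} {p m : ℕ}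
    (h : ∀ n : ℕ, fibAB a b (n + m) ≡ fibAB a b n [ZMOD (p : ℤ)]) (c r : ℕ) :
    fibAB a b (m * c + r) ≡ fibAB a b r [ZMOD (p : ℤ)] := by
  induction c with
  | zero => simp [Int.ModEq.refl]
  | succ c ih =>
    have := (h (m * c + r)).trans ih
    rwa [show m * c + r + m = m * (c + 1) + r by ring] at this

lemma sum_flcSign_of_isPLPrime {a b k : ℤ} {p : ℕ} (h : IsPLPrime a b p k) :
    ∑ j ∈ Finset.range (pisanoAB a b p), flcSign p (fibAB a b j) = k := by
  rw [IsPLPrime] at h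
  simp only [LambdaSet, ← Finset.sum_boole, ← Finset.sum_sub_distrib] at h
  rw [h]
  refine Finset.sum_congr rfl fun j _ => ?_
  rw [flcSign]
  rcases jacobiSym.trichotomy (fibAB a b j) p with h | h | h <;> simp [h]

/-- The labeling of the corona in blocks of length `q + 2`: the vertex numbered `c` in `G` gets
`(q + 2) c`, and its path copy gets the following `q + 1` labels in order. -/
def coronaLabel {V : Type*} {n : ℕ} (idx : V ≃ Fin n) (q : ℕ) : V ⊕ V × Fin (q + 1) → ℕ
  | Sum.inl u => (q + 2) * (idx u : ℕ) + 0
  | Sum.inr (u, s) => (q + 2) * (idx u : ℕ) + ((s : ℕ) + 1)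

lemma block_unique {m c d r s : ℕ} (hr : r < m) (hs : s < m) (h : m * c + r = m * d + s) :
    c = d ∧ r = s := by
  have h1 := congrArg (· % m) h
  simp only [Nat.mul_add_mod, Nat.mod_eq_of_lt hr, Nat.mod_eq_of_lt hs] at h1
  subst h1
  exact ⟨Nat.eq_of_mul_eq_mul_left (by omega) (Nat.add_right_cancel h), rfl⟩

lemma coronaLabel_injective {V : Type*} {n : ℕ} (idx : V ≃ Fin n) (q : ℕ) :
    Function.Injective (coronaLabel idx q) := by
  rintro (u | ⟨u, s⟩) (v | ⟨v, t⟩) h <;>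
    obtain ⟨h1, h2⟩ := block_unique (by omega) (by omega) h <;>
    have h3 : u = v := idx.injective (Fin.ext h1)
  · rw [h3]
  · omega
  · omega
  · have h4 : s = t := Fin.ext (by omega)
    rw [h3, h4]

lemma coronaLabel_lt {V : Type*} {n : ℕ} (idx : V ≃ Fin n) (q : ℕ) (x : V ⊕ V × Fin (q + 1)) :
    coronaLabel idx q x < (q + 2) * n := by
  have aux : ∀ (c : Fin n) (r : ℕ), r < q + 2 → (q + 2) * (c : ℕ) + r < (q + 2) * n := by
    intro c r hr
    have := Nat.mul_le_mul_left (q + 2) (show (c : ℕ) + 1 ≤ n from c.2)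
    rw [Nat.mul_succ] at this
    omega
  rcases x with u | ⟨u, s⟩
  · exact aux _ _ (by omega)
  · exact aux _ _ (by omega)

/-- For `b ≠ 0`, `k ≥ 1`, an odd prime `p` that is a `k`-PL prime
relative to `(0,b)` with `(F₁/p) = (F₂/p) = 1`, and a connected graph `G` of order `n`
and size `n(2k-1) + ε` with `ε ∈ {-1,0,1}`, the corona `G ∘ P_{π_p(0,b)-1}` is a
`(0,b)`-FLC graph modulo `p`. -/
theorem corona_path_isFLCGraph (b : ℤ) (hb : b ≠ 0) (k : ℤ) (hk : 1 ≤ k) (p : ℕ)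
    (hp : p.Prime) (hodd : Odd p) (hPL : IsPLPrime 0 b p k)
    (hF1 : jacobiSym (fibAB 0 b 1) p = 1) (hF2 : jacobiSym (fibAB 0 b 2) p = 1)
    (n : ℕ) {V : Type} [Fintype V] (hV : Fintype.card V = n)
    (G : SimpleGraph V) (hG : G.Connected)
    (ε : ℤ) (hε : ε = -1 ∨ ε = 0 ∨ ε = 1)
    (hsize : (G.edgeSet.ncard : ℤ) = (n : ℤ) * (2 * k - 1) + ε) :
    IsFLCGraph (coronaG G (pathG (pisanoAB 0 b p - 1))) 0 b p := by
  classical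
  subst hV
  have hsum := sum_flcSign_of_isPLPrime hPL
  -- An empty set of periods would give `π = 0`, all `Λ_j` empty, and `k = 0`.
  have hne : {m : ℕ | 0 < m ∧
      ∀ i : ℕ, fibAB 0 b (i + m) ≡ fibAB 0 b i [ZMOD (p : ℤ)]}.Nonempty := by
    by_contra hcon
    rw [Set.not_nonempty_iff_eq_empty] at hcon
    have h0 : pisanoAB 0 b p = 0 := by rw [pisanoAB, hcon, Nat.sInf_empty]
    rw [h0, Finset.sum_range_zero] at hsum
    omega
  obtain ⟨hpos, hper⟩ :
      0 < pisanoAB 0 b p ∧ ∀ i : ℕ, fibAB 0 b (i + pisanoAB 0 b p) ≡ fibAB 0 b i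
        [ZMOD (p : ℤ)] := Nat.sInf_mem hne
  have s0 : flcSign p (fibAB 0 b 0) = -1 := flcSign_zero hp
  have s1 : flcSign p (fibAB 0 b 1) = 1 := by rw [flcSign, if_pos hF1]
  have s2 : flcSign p (fibAB 0 b 2) = 1 := by rw [flcSign, if_pos hF2]
  have h1 : pisanoAB 0 b p ≠ 1 := by
    intro h
    rw [h] at hper
    have := flcSign_congr (hper 0)
    rw [zero_add, s1, s0] at this
    omega
  obtain ⟨q, hq⟩ : ∃ q, pisanoAB 0 b p = q + 2 := ⟨pisanoAB 0 b p - 2, by omega⟩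
  rw [hq] at hsum hper
  rw [show pisanoAB 0 b p - 1 = q + 1 by omega]
  have hblock := fibAB_add_mul hper
  have hspoke : ∑ s : Fin (q + 1), flcSign p (fibAB 0 b ((s : ℕ) + 1)) = k + 1 := by
    rw [Fin.sum_univ_eq_sum_range fun s => flcSign p (fibAB 0 b (s + 1))]
    rw [Finset.sum_range_succ', s0] at hsum
    omega
  -- Shift the period sum by one term: `F_π ≡ F₀` is included, and `F₀, F₁, F₂` are removed.
  have hpath : ∑ s : Fin q, flcSign p (fibAB 0 b ((s : ℕ) + 3)) = k - 2 := by
    rw [Fin.sum_univ_eq_sum_range fun s => flcSign p (fibAB 0 b (s + 3))]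
    have hlast : flcSign p (fibAB 0 b (q + 2)) = -1 := by
      rw [← s0]
      simpa using flcSign_congr (hper 0)
    have h3 := Finset.sum_range_succ (fun j => flcSign p (fibAB 0 b j)) (q + 2)
    rw [hsum, hlast, Finset.sum_range_succ', Finset.sum_range_succ', Finset.sum_range_succ',
      s0] at h3
    simp only [zero_add, Nat.reduceAdd, add_assoc, s1, s2] at h3
    omega
  let idx := Fintype.equivFin V
  have hcard : Fintype.card (V ⊕ V × Fin (q + 1)) = (q + 2) * Fintype.card V := by
    simp only [Fintype.card_sum, Fintype.card_prod, Fintype.card_fin]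
    ring
  let f₀ : V ⊕ V × Fin (q + 1) → Fin (Fintype.card (V ⊕ V × Fin (q + 1))) :=
    fun x => ⟨coronaLabel idx q x, hcard ▸ coronaLabel_lt idx q x⟩
  have hf₀ : Function.Bijective f₀ := by
    rw [Fintype.bijective_iff_injective_and_card]
    exact ⟨fun x y h => coronaLabel_injective idx q (congrArg Fin.val h), by simp⟩
  refine ⟨Equiv.ofBijective f₀ hf₀, ?_⟩
  change |(flcCount _ 0 b p (coronaLabel idx q) 0 : ℤ) -
    (flcCount _ 0 b p (coronaLabel idx q) 1 : ℤ)| ≤ 1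
  have hcount := flcCount_sub _ 0 b p hp (coronaLabel idx q) (coronaEdge G q)
    (coronaEdge_injective G q) (coronaEdge_range G q)
  have hG0 : ∀ e : G.edgeSet, flcSign p (fibAB 0 b (coronaLabel idx q (coronaEdge G q
      (Sum.inl e)).1) + fibAB 0 b (coronaLabel idx q (coronaEdge G q (Sum.inl e)).2)) = -1 := by
    intro e
    rw [← flcSign_zero hp]
    exact flcSign_congr ((hblock _ 0).add (hblock _ 0))
  have hS : ∀ (u : V) (s : Fin (q + 1)), flcSign p (fibAB 0 b (coronaLabel idx q (coronaEdge G q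
      (Sum.inr (Sum.inl (u, s)))).1) + fibAB 0 b (coronaLabel idx q (coronaEdge G q
      (Sum.inr (Sum.inl (u, s)))).2)) = flcSign p (fibAB 0 b ((s : ℕ) + 1)) := by
    intro u s
    rw [← zero_add (fibAB 0 b ((s : ℕ) + 1))]
    exact flcSign_congr ((hblock _ 0).add (hblock _ _))
  have hP : ∀ (u : V) (s : Fin q), flcSign p (fibAB 0 b (coronaLabel idx q (coronaEdge G q
      (Sum.inr (Sum.inr (u, s)))).1) + fibAB 0 b (coronaLabel idx q (coronaEdge G q
      (Sum.inr (Sum.inr (u, s)))).2)) = flcSign p (fibAB 0 b ((s : ℕ) + 3)) := by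
    intro u s
    exact flcSign_congr ((hblock _ ((s : ℕ) + 1)).add (hblock _ ((s : ℕ) + 2)))
  have hE : (Fintype.card G.edgeSet : ℤ) = Fintype.card V * (2 * k - 1) + ε := by
    rw [← hsize, ← Nat.card_eq_fintype_card, Nat.card_coe_set_eq]
  rw [Fintype.sum_sum_type, Fintype.sum_sum_type, Fintype.sum_prod_type, Fintype.sum_prod_type]
    at hcount
  simp only [hG0, hS, hP, hspoke, hpath, Finset.sum_const, Finset.card_univ, nsmul_eq_mul, hE]
    at hcount
  rw [abs_sub_comm, hcount]
  have : ((Fintype.card V : ℤ) * (2 * k - 1) + ε) * -1 +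
      (Fintype.card V * (k + 1) + Fintype.card V * (k - 2)) = -ε := by ring
  rw [this]
  rcases hε with rfl | rfl | rfl <;> simp
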